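/- arXiv:1806.03221 — 2 statements merged into one kernel-verified Lean document; each statement's English description precedes it below -/
import Mathlib

section
/- If W = (w_1,...,w_{k-1}) is a tame legal schedule, then (2,2,W) is also tame. In particular, all schedules of the form (2,2,...,2) are tame. -/
open Polynomial Finset

noncomputable section

abbrev K : Type := RatFunc ℚ

def qq : K := RatFunc.X

def qint (q : K) (n : ℕ) : K := ∑ i ∈ Finset.range n, q ^ i

def Legal (W : List ℕ) : Prop :=
  (∀ h : W ≠ [], 1 ≤ W.head h ∧ W.head h ≤ 2) ∧
    List.Chain' (fun a b => 1 ≤ b ∧ b ≤ a + 1) W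

def Prev (q : K) : List ℕ → MvPolynomial ℤ K
  | [] => MvPolynomial.C q * MvPolynomial.X (-1) + MvPolynomial.X 0
  | w :: V =>
      MvPolynomial.C ((1 - q)⁻¹) *
        ((MvPolynomial.X ((V.length : ℤ) + 1) - MvPolynomial.C (q ^ w)) * Prev q V +
          (1 - MvPolynomial.X ((V.length : ℤ) + 1)) *
            MvPolynomial.aeval
              (fun j : ℤ =>
                if (V.length : ℤ) + 1 - (w : ℤ) ≤ j ∧ j ≤ (V.length : ℤ) then
                  MvPolynomial.C q * MvPolynomial.X j
                else MvPolynomial.X j)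
              (Prev q V))

def Psched (q : K) (W : List ℕ) : MvPolynomial ℤ K := Prev q W.reverse

def Qsched (q : K) (W : List ℕ) : Polynomial K :=
  MvPolynomial.aeval (fun _ : ℤ => (Polynomial.X : Polynomial K)) (Psched q W)

def TameFE (q : K) (W : List ℕ) : Prop :=
  ∀ x : K, x ≠ 0 →
    (1 - q / x) * (Qsched q W).eval x +
        x ^ (W.length + 1) * (1 - q * x) * (Qsched q W).eval x⁻¹ =
      (1 + x ^ (W.length + 1)) * ((1 - q ^ 2) * (W.map (qint q)).prod)

/-!
Extending a schedule by the entry `w` at position `n + 1` multiplies the squarefree monomial `x_T`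
by `[d] x_{n+1} + q^d [w - d]`, where `d` counts the elements of `T` among the last `w` indices.
Two entries `2` applied to `q x_{-1} + x_0` therefore give an explicit polynomial of the form
`x_{-1} A + x_0 B` with `A`, `B` in the span of `1, x_1, x_2, x_1 x_2`. If `W` is legal, no window
of `W` placed after `2, 2` reaches `x_{-1}` or `x_0`, so these two factors pass through. Of what
remains, `q x_1 + x_2` yields `Q_W` with indices shifted by two, while `1` and `x_1 x_2` meet only
empty and full windows and contribute multiples of `∏ [w_i]`. This is the identity
`Q_{2,2,W} = q x Q_W + (2 q² + q³) ∏ [w_i] x + (1 + 2 q) ∏ [w_i] x^{k+2}` for `W` of length `k - 1`,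
from which tameness of `(2,2,W)` follows by algebra.

Legality of `(2,2,W)` also permits `W` to start with `3`, but such a `W` is not tame. The functional
equation relates the coefficients of `x` and `x^k` in `Q_W`, which are polynomials in `q` with
natural coefficients, and at `q = 1` the relation says that they are equal. However, there the
coefficient of `x` is strictly larger: at each step the monomials for the top coefficient gain the
factor `d`, those for the bottom coefficient gain `w - d'`, and `d + d' ≤ w` because the two
monomials involve disjoint sets of variables, with strict inequality in the first step if `w ≥ 3`.
-/

section ScaleVars

variable {σ R : Type*} [CommSemiring R] [DecidableEq σ]

/-- The substitution `x_i ↦ r x_i` for `i ∈ s`, the other variables being left alone, as it occurs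
in the recursion of `Prev`. -/
def scaleVars (r : R) (s : Finset σ) : MvPolynomial σ R →ₐ[R] MvPolynomial σ R :=
  MvPolynomial.aeval fun i => if i ∈ s then MvPolynomial.C r * MvPolynomial.X i
    else MvPolynomial.X i

theorem scaleVars_X (r : R) (s : Finset σ) (i : σ) :
    scaleVars r s (MvPolynomial.X i) =
      MvPolynomial.C (if i ∈ s then r else 1) * MvPolynomial.X i := by
  split_ifs with h <;> simp [scaleVars, h]

theorem scaleVars_prod_X (r : R) (s T : Finset σ) :
    scaleVars r s (∏ i ∈ T, MvPolynomial.X i) =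
      MvPolynomial.C (r ^ #(s ∩ T)) * ∏ i ∈ T, MvPolynomial.X i := by
  simp only [map_prod, scaleVars_X, Finset.prod_mul_distrib]
  rw [← map_prod, Finset.prod_ite_mem, Finset.prod_const, Finset.inter_comm]

theorem coeff_scaleVars (r : R) (s : Finset σ) (p : MvPolynomial σ R) (d : σ →₀ ℕ) :
    (scaleVars r s p).coeff d = (d.prod fun i k => (if i ∈ s then r else 1) ^ k) * p.coeff d := by
  induction p using MvPolynomial.induction_on' with
  | monomial e a =>
    have key : scaleVars r s (MvPolynomial.monomial e a) =
        MvPolynomial.monomial e ((e.prod fun i k => (if i ∈ s then r else 1) ^ k) * a) := by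
      simp only [MvPolynomial.monomial_eq, map_mul, Finsupp.prod, map_prod, map_pow, scaleVars_X,
        mul_pow, Finset.prod_mul_distrib, MvPolynomial.algHom_C, MvPolynomial.algebraMap_eq]
      ring
    rw [key, MvPolynomial.coeff_monomial, MvPolynomial.coeff_monomial]
    split_ifs with h
    · rw [h]
    · rw [mul_zero]
  | add p p' hp hp' =>
    rw [map_add, MvPolynomial.coeff_add, hp, hp', MvPolynomial.coeff_add, mul_add]

theorem totalDegree_scaleVars_le (r : R) (s : Finset σ) (p : MvPolynomial σ R) :
    (scaleVars r s p).totalDegree ≤ p.totalDegree := by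
  refine Finset.sup_mono fun d hd => ?_
  rw [MvPolynomial.mem_support_iff, coeff_scaleVars] at hd
  exact MvPolynomial.mem_support_iff.mpr (right_ne_zero_of_mul hd)

theorem scaleVars_mem_idealOfVars_pow {r : R} {s : Finset σ} {m : ℕ} {p : MvPolynomial σ R}
    (hp : p ∈ MvPolynomial.idealOfVars σ R ^ m) :
    scaleVars r s p ∈ MvPolynomial.idealOfVars σ R ^ m := by
  rw [MvPolynomial.mem_pow_idealOfVars_iff'] at hp ⊢
  intro d hd
  rw [coeff_scaleVars, hp d hd, mul_zero]

theorem rename_scaleVars {τ : Type*} [DecidableEq τ] (f : σ ↪ τ) (r : R) (s : Finset σ)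
    (p : MvPolynomial σ R) :
    MvPolynomial.rename f (scaleVars r s p) = scaleVars r (s.map f) (MvPolynomial.rename f p) := by
  suffices h : (MvPolynomial.rename f).comp (scaleVars r s) =
      (scaleVars r (s.map f)).comp (MvPolynomial.rename f) from DFunLike.congr_fun h p
  ext1 i
  simp [scaleVars_X]

end ScaleVars

section ToUnivariate

variable {σ R : Type*} [CommSemiring R]

/-- The specialization of all variables `x_j` to the single variable `x`, which turns `Psched` into
`Qsched`. -/
def toUnivariate : MvPolynomial σ R →ₐ[R] R[X] :=
  MvPolynomial.aeval fun _ => X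

theorem toUnivariate_X (i : σ) : toUnivariate (MvPolynomial.X (R := R) i) = X :=
  MvPolynomial.aeval_X _ _

theorem toUnivariate_C (r : R) : toUnivariate (MvPolynomial.C (σ := σ) r) = C r :=
  MvPolynomial.aeval_C _ _

theorem toUnivariate_prod_X (T : Finset σ) :
    toUnivariate (∏ i ∈ T, MvPolynomial.X (R := R) i) = X ^ #T := by
  simp only [map_prod, toUnivariate_X, Finset.prod_const]

theorem toUnivariate_rename {τ : Type*} (f : σ → τ) (p : MvPolynomial σ R) :
    toUnivariate (MvPolynomial.rename f p) = toUnivariate p :=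
  MvPolynomial.aeval_rename _ _ _

theorem natDegree_toUnivariate_le (p : MvPolynomial σ R) :
    (toUnivariate p).natDegree ≤ p.totalDegree := by
  rw [toUnivariate, ← mul_one p.totalDegree]
  exact MvPolynomial.aeval_natDegree_le p le_rfl _ fun _ => natDegree_X_le

theorem X_pow_dvd_toUnivariate {m : ℕ} {p : MvPolynomial σ R}
    (hp : p ∈ MvPolynomial.idealOfVars σ R ^ m) : X ^ m ∣ toUnivariate p := by
  have hle : MvPolynomial.idealOfVars σ R ≤ (Ideal.span {X}).comap toUnivariate := by
    rw [MvPolynomial.idealOfVars, Ideal.span_le]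
    rintro _ ⟨i, rfl⟩
    exact Ideal.mem_span_singleton.mpr (toUnivariate_X i).symm.dvd
  have h := Ideal.le_comap_pow _ m (Ideal.pow_right_mono hle m hp)
  rwa [Ideal.mem_comap, Ideal.span_singleton_pow, Ideal.mem_span_singleton] at h

end ToUnivariate

theorem totalDegree_prod_X_le {σ R : Type*} [CommSemiring R] [Nontrivial R] (T : Finset σ) :
    (∏ i ∈ T, MvPolynomial.X (R := R) i).totalDegree ≤ #T := by
  refine (MvPolynomial.totalDegree_finsetProd T _).trans ?_
  simp only [MvPolynomial.totalDegree_X, Finset.sum_const, smul_eq_mul, mul_one, le_refl]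

local notation "𝐱" => (MvPolynomial.X : ℤ → MvPolynomial ℤ K)

/-! ### Extending a schedule by an entry -/

theorem qint_eq_div {q : K} (hq : q ≠ 1) (n : ℕ) : qint q n = (1 - q)⁻¹ * (1 - q ^ n) := by
  rw [qint, geom_sum_eq hq, ← neg_sub q 1, ← neg_sub (q ^ n) 1, inv_neg, neg_mul_neg,
    div_eq_inv_mul]

theorem qint_two (q : K) : qint q 2 = 1 + q := by
  simp [qint, Finset.sum_range_succ]

/-- The indices `n + 1 - w, …, n` of the last `w` variables before `x_{n+1}`: those multiplied by
`q` when a schedule is extended by the entry `w` at position `n + 1`. -/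
def window (n w : ℕ) : Finset ℤ := Finset.Icc ((n : ℤ) + 1 - w) n

theorem card_window (n w : ℕ) : #(window n w) = w := by
  simp [window]

theorem mem_window {n w : ℕ} {i : ℤ} : i ∈ window n w ↔ (n : ℤ) + 1 - w ≤ i ∧ i ≤ n :=
  Finset.mem_Icc

theorem map_window (n w m : ℕ) :
    (window n w).map (addRightEmbedding (m : ℤ)) = window (n + m) w := by
  rw [window, Finset.map_add_right_Icc, window, Nat.cast_add, sub_add_eq_add_sub, add_right_comm]

theorem window_subset_Icc {n w : ℕ} (h : w ≤ n) : window n w ⊆ Finset.Icc 1 (n : ℤ) :=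
  Finset.Icc_subset_Icc_left (by lia)

theorem prod_Icc_add_one (n : ℕ) :
    ∏ i ∈ Finset.Icc (1 : ℤ) (n + 1 : ℕ), 𝐱 i =
      𝐱 (n + 1) * ∏ i ∈ Finset.Icc (1 : ℤ) n, 𝐱 i := by
  have h : Finset.Icc (1 : ℤ) (n + 1 : ℕ) = insert ((n : ℤ) + 1) (Finset.Icc 1 (n : ℤ)) := by
    ext i
    simp only [Finset.mem_Icc, Finset.mem_insert]
    lia
  rw [h, Finset.prod_insert (by simp)]

/-- The passage from the polynomial of a schedule of length `n` to that of the schedule extended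
by the entry `w`, as an operator on all polynomials. -/
def step (q : K) (n w : ℕ) : MvPolynomial ℤ K →ₗ[K] MvPolynomial ℤ K :=
  (1 - q)⁻¹ • (LinearMap.mulLeft K (𝐱 (n + 1) - MvPolynomial.C (q ^ w)) +
    LinearMap.mulLeft K (1 - 𝐱 (n + 1)) ∘ₗ (scaleVars q (window n w)).toLinearMap)

theorem step_apply (q : K) (n w : ℕ) (p : MvPolynomial ℤ K) :
    step q n w p = MvPolynomial.C (1 - q)⁻¹ * ((𝐱 (n + 1) - MvPolynomial.C (q ^ w)) * p +
      (1 - 𝐱 (n + 1)) * scaleVars q (window n w) p) := by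
  rw [MvPolynomial.C_mul']
  rfl

/-- `run q n W p` extends, entry by entry, a polynomial `p` attached to `n` positions by the
entries of the schedule `W`. Unlike `Prev` it recurses from the front of the schedule, where
`(2,2,W)` and `W` differ. -/
def run (q : K) : ℕ → List ℕ → MvPolynomial ℤ K →ₗ[K] MvPolynomial ℤ K
  | _, [] => LinearMap.id
  | n, w :: W => run q (n + 1) W ∘ₗ step q n w

theorem run_cons (q : K) (n w : ℕ) (W : List ℕ) (p : MvPolynomial ℤ K) :
    run q n (w :: W) p = run q (n + 1) W (step q n w p) := rfl

theorem run_C_mul (q : K) (n : ℕ) (W : List ℕ) (c : K) (p : MvPolynomial ℤ K) :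
    run q n W (MvPolynomial.C c * p) = MvPolynomial.C c * run q n W p := by
  rw [MvPolynomial.C_mul', map_smul, MvPolynomial.C_mul']

theorem run_concat (q : K) (n : ℕ) (W : List ℕ) (w : ℕ) (p : MvPolynomial ℤ K) :
    run q n (W ++ [w]) p = step q (n + W.length) w (run q n W p) := by
  induction W generalizing n p with
  | nil => rfl
  | cons v W ih =>
    rw [List.cons_append, run_cons, ih, run_cons, List.length_cons, add_right_comm, add_assoc]

theorem Prev_cons (q : K) (w : ℕ) (V : List ℕ) :
    Prev q (w :: V) = step q V.length w (Prev q V) := by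
  simp only [Prev, step_apply, scaleVars, mem_window]

theorem Psched_eq_run (q : K) (W : List ℕ) :
    Psched q W = run q 0 W (MvPolynomial.C q * 𝐱 (-1) + 𝐱 0) := by
  induction W using List.reverseRecOn with
  | nil => rfl
  | append_singleton W w ih =>
    rw [Psched, List.reverse_concat, Prev_cons, List.length_reverse, run_concat, zero_add, ← ih,
      Psched]

theorem step_prod_X {q : K} (hq : q ≠ 1) (n w : ℕ) (T : Finset ℤ) :
    step q n w (∏ i ∈ T, 𝐱 i) =
      (MvPolynomial.C (qint q #(window n w ∩ T)) * 𝐱 (n + 1) +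
        MvPolynomial.C (q ^ #(window n w ∩ T) * qint q (w - #(window n w ∩ T)))) *
        ∏ i ∈ T, 𝐱 i := by
  have hd : #(window n w ∩ T) ≤ w :=
    (Finset.card_le_card Finset.inter_subset_left).trans_eq (card_window n w)
  obtain ⟨e, he⟩ := Nat.exists_eq_add_of_le hd
  rw [step_apply, scaleVars_prod_X, qint_eq_div hq, qint_eq_div hq]
  generalize #(window n w ∩ T) = d at *
  subst he
  simp only [Nat.add_sub_cancel_left, pow_add, map_mul, map_sub, map_one]
  ring

theorem step_X {q : K} (hq : q ≠ 1) (n w : ℕ) (i : ℤ) :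
    step q n w (𝐱 i) =
      (MvPolynomial.C (qint q #(window n w ∩ {i})) * 𝐱 (n + 1) +
        MvPolynomial.C (q ^ #(window n w ∩ {i}) * qint q (w - #(window n w ∩ {i})))) * 𝐱 i := by
  simpa only [Finset.prod_singleton] using step_prod_X hq n w {i}

theorem step_one {q : K} (hq : q ≠ 1) (n w : ℕ) : step q n w 1 = MvPolynomial.C (qint q w) := by
  simpa [qint] using step_prod_X hq n w ∅

theorem step_prod_X_of_window_subset {q : K} (hq : q ≠ 1) {n w : ℕ} {T : Finset ℤ}
    (hT : window n w ⊆ T) :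
    step q n w (∏ i ∈ T, 𝐱 i) = MvPolynomial.C (qint q w) * (𝐱 (n + 1) * ∏ i ∈ T, 𝐱 i) := by
  rw [step_prod_X hq, Finset.inter_eq_left.mpr hT, card_window, Nat.sub_self]
  simp [qint, mul_assoc]

theorem step_two_X {q : K} (hq : q ≠ 1) {n : ℕ} {i : ℤ} (hi : i ∈ window n 2) :
    step q n 2 (𝐱 i) = (𝐱 (n + 1) + MvPolynomial.C q) * 𝐱 i := by
  rw [step_X hq, Finset.inter_singleton_of_mem hi, Finset.card_singleton]
  simp [qint]

theorem step_X_mul (q : K) {n w : ℕ} {i : ℤ} (h : i ∉ window n w) (p : MvPolynomial ℤ K) :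
    step q n w (𝐱 i * p) = 𝐱 i * step q n w p := by
  rw [step_apply, step_apply, map_mul, scaleVars_X, if_neg h, map_one, one_mul]
  ring

theorem run_one {q : K} (hq : q ≠ 1) (n : ℕ) (W : List ℕ) :
    run q n W 1 = MvPolynomial.C (W.map (qint q)).prod := by
  induction W generalizing n with
  | nil => simp [run]
  | cons w W ih =>
    rw [run_cons, step_one hq, ← mul_one (MvPolynomial.C _), run_C_mul, ih, ← map_mul,
      List.map_cons, List.prod_cons]

section Chain

variable {a n : ℕ} {W : List ℕ}

theorem run_prod_Icc {q : K} (hq : q ≠ 1) (hW : (a :: W).IsChain fun a b => b ≤ a + 1)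
    (ha : a < n) :
    run q n W (∏ i ∈ Finset.Icc (1 : ℤ) n, 𝐱 i) =
      MvPolynomial.C (W.map (qint q)).prod *
        ∏ i ∈ Finset.Icc (1 : ℤ) (n + W.length : ℕ), 𝐱 i := by
  induction W generalizing a n with
  | nil => simp [run]
  | cons w W ih =>
    obtain ⟨hw, hW⟩ := List.isChain_cons_cons.mp hW
    rw [run_cons, step_prod_X_of_window_subset hq (window_subset_Icc (by lia)), run_C_mul,
      ← prod_Icc_add_one, ih hW (by lia), ← mul_assoc, ← map_mul,
      List.map_cons, List.prod_cons, List.length_cons, add_right_comm, add_assoc]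

theorem run_X_mul (q : K) (hW : (a :: W).IsChain fun a b => b ≤ a + 1) {i : ℤ}
    (ha : i + a < n) (p : MvPolynomial ℤ K) :
    run q n W (𝐱 i * p) = 𝐱 i * run q n W p := by
  induction W generalizing a n p with
  | nil => rfl
  | cons w W ih =>
    obtain ⟨hw, hW⟩ := List.isChain_cons_cons.mp hW
    have hi : i ∉ window n w := by
      rw [mem_window]
      lia
    rw [run_cons, step_X_mul q hi, ih hW (by lia), run_cons]

end Chain

theorem rename_step (q : K) (n w m : ℕ) (p : MvPolynomial ℤ K) :
    MvPolynomial.rename (addRightEmbedding (m : ℤ)) (step q n w p) =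
      step q (n + m) w (MvPolynomial.rename (addRightEmbedding (m : ℤ)) p) := by
  have hX : MvPolynomial.rename (addRightEmbedding (m : ℤ)) (𝐱 (n + 1)) =
      𝐱 ((n + m : ℕ) + 1) := by
    rw [MvPolynomial.rename_X, addRightEmbedding_apply]
    congr 1
    lia
  simp only [step_apply, map_mul, map_add, map_sub, map_one, hX, rename_scaleVars, map_window,
    MvPolynomial.rename_C]

theorem rename_run (q : K) (n m : ℕ) (W : List ℕ) (p : MvPolynomial ℤ K) :
    MvPolynomial.rename (addRightEmbedding (m : ℤ)) (run q n W p) =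
      run q (n + m) W (MvPolynomial.rename (addRightEmbedding (m : ℤ)) p) := by
  induction W generalizing n p with
  | nil => rfl
  | cons w W ih => rw [run_cons, ih, rename_step, add_right_comm, run_cons]

/-! ### The structural identity -/

theorem Qsched_eq (q : K) (W : List ℕ) :
    Qsched q W = toUnivariate (run q 0 W (MvPolynomial.C q * 𝐱 (-1) + 𝐱 0)) :=
  congrArg toUnivariate (Psched_eq_run q W)

theorem step_two_base {q : K} (hq : q ≠ 1) :
    step q 0 2 (MvPolynomial.C q * 𝐱 (-1) + 𝐱 0) =
      (𝐱 1 + MvPolynomial.C q) * (MvPolynomial.C q * 𝐱 (-1) + 𝐱 0) := by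
  rw [MvPolynomial.C_mul', map_add, map_smul, step_two_X hq (by decide),
    step_two_X hq (by decide), Nat.cast_zero, zero_add]
  simp only [← MvPolynomial.C_mul']
  ring

-- Sorted by `x_{-1}` and `x_0`, since no window of the entries to come reaches these variables.
theorem step_two_step_two_base {q : K} (hq : q ≠ 1) :
    step q 1 2 (step q 0 2 (MvPolynomial.C q * 𝐱 (-1) + 𝐱 0)) =
      𝐱 (-1) * (MvPolynomial.C q * (𝐱 1 * 𝐱 2) + MvPolynomial.C (q ^ 2) * 𝐱 1 +
          MvPolynomial.C (q ^ 2 + q ^ 3)) +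
        𝐱 0 * (MvPolynomial.C (1 + q) * (𝐱 1 * 𝐱 2) + MvPolynomial.C q * 𝐱 2 +
          MvPolynomial.C (q ^ 2)) := by
  have expand : (𝐱 1 + MvPolynomial.C q) * (MvPolynomial.C q * 𝐱 (-1) + 𝐱 0) =
      𝐱 (-1) * (q • 𝐱 1 + q ^ 2 • 1) + 𝐱 0 * 𝐱 1 + q • 𝐱 0 := by
    simp only [← MvPolynomial.C_mul', map_pow]
    ring
  have step_X_X : step q 1 2 (𝐱 0 * 𝐱 1) = MvPolynomial.C (1 + q) * (𝐱 2 * (𝐱 0 * 𝐱 1)) := by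
    rw [← Finset.prod_pair zero_ne_one, step_prod_X_of_window_subset hq (by decide), qint_two]
    rfl
  rw [step_two_base hq, expand, map_add, map_add, step_X_mul q (by decide), map_add, map_smul,
    map_smul, map_smul, step_two_X hq (by decide), step_two_X hq (by decide), step_X_X,
    step_one hq, qint_two, Nat.cast_one, one_add_one_eq_two]
  simp only [← MvPolynomial.C_mul', map_add, map_pow, map_one]
  ring

theorem Legal.isChain_one_cons {W : List ℕ} (hW : Legal W) :
    (1 :: W).IsChain fun a b => 1 ≤ b ∧ b ≤ a + 1 := by
  cases W with
  | nil => exact List.isChain_singleton _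
  | cons w W => exact List.isChain_cons_cons.mpr ⟨hW.1 (List.cons_ne_nil w W), hW.2⟩

theorem Qsched_two_two {q : K} (hq : q ≠ 1) {W : List ℕ} (hW : Legal W) :
    Qsched q (2 :: 2 :: W) = C q * X * Qsched q W +
      C ((2 * q ^ 2 + q ^ 3) * (W.map (qint q)).prod) * X +
      C ((1 + 2 * q) * (W.map (qint q)).prod) * X ^ (W.length + 3) := by
  have hchain : (1 :: W).IsChain fun a b => b ≤ a + 1 :=
    hW.isChain_one_cons.imp fun _ _ h => h.2
  have run_const (c : K) : toUnivariate (run q 2 W (MvPolynomial.C c)) =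
      C (c * (W.map (qint q)).prod) := by
    rw [← mul_one (MvPolynomial.C c), run_C_mul, run_one hq, ← map_mul, toUnivariate_C]
  have run_top : toUnivariate (run q 2 W (𝐱 1 * 𝐱 2)) =
      C (W.map (qint q)).prod * X ^ (W.length + 2) := by
    have prod_Icc : ∏ i ∈ Finset.Icc (1 : ℤ) (2 : ℕ), 𝐱 i = 𝐱 1 * 𝐱 2 :=
      Finset.prod_pair (a := (1 : ℤ)) (b := 2) (by decide)
    rw [← prod_Icc, run_prod_Icc hq hchain one_lt_two, map_mul, toUnivariate_C,
      toUnivariate_prod_X, Int.card_Icc, add_sub_cancel_right, Int.toNat_natCast, add_comm 2]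
  -- After `2, 2` the variables `x_1`, `x_2` stand where `x_{-1}`, `x_0` stand at the start.
  have run_shift : C q * toUnivariate (run q 2 W (𝐱 1)) + toUnivariate (run q 2 W (𝐱 2)) =
      Qsched q W := by
    have h := congrArg toUnivariate (rename_run q 0 2 W (MvPolynomial.C q * 𝐱 (-1) + 𝐱 0))
    rw [toUnivariate_rename, ← Qsched_eq] at h
    simpa [run_C_mul, toUnivariate_C] using h.symm
  have hQ : Qsched q (2 :: 2 :: W) = toUnivariate (run q 2 W _) :=
    (Qsched_eq q _).trans
      (congrArg (fun p => toUnivariate (run q 2 W p)) (step_two_step_two_base hq))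
  rw [hQ, map_add, run_X_mul q hchain (by decide), run_X_mul q hchain (by decide)]
  simp only [map_add (run q 2 W), map_add toUnivariate, map_mul toUnivariate, toUnivariate_X,
    toUnivariate_C, run_C_mul, run_const, run_top, ← run_shift]
  simp only [map_mul, map_add, map_pow, map_one, map_ofNat]
  ring

theorem TameFE.two_two {q : K} (hq : q ≠ 1) {W : List ℕ} (hW : Legal W) (h : TameFE q W) :
    TameFE q (2 :: 2 :: W) := by
  intro x hx
  have hx' := h x hx
  rw [Qsched_two_two hq hW]
  simp only [eval_add, eval_mul, eval_C, eval_X, eval_pow, List.length_cons, List.map_cons,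
    List.prod_cons, qint_two, inv_pow]
  generalize (W.map (qint q)).prod = P at *
  generalize (Qsched q W).eval x = A at *
  generalize (Qsched q W).eval x⁻¹ = B at *
  field_simp at hx' ⊢
  linear_combination q * x * hx'

theorem tameFE_nil (q : K) : TameFE q [] := by
  intro x hx
  have hQ : Qsched q [] = C (1 + q) * X := by
    simp [Qsched, Psched, Prev, algebraMap_eq]
    ring
  simp only [hQ, eval_mul, eval_C, eval_X, List.length_nil, List.map_nil, List.prod_nil]
  field_simp
  ring

theorem tameFE_two {q : K} (hq : q ≠ 1) : TameFE q [2] := by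
  intro x hx
  have hQ : Qsched q [2] = (X + C q) * (C (1 + q) * X) := by
    rw [Qsched_eq, run_cons, step_two_base hq, run, LinearMap.id_apply]
    simp only [map_mul, map_add, toUnivariate_C, toUnivariate_X, map_one]
    ring
  simp only [hQ, eval_mul, eval_add, eval_C, eval_X, List.length_singleton, List.map_singleton,
    List.prod_singleton, qint_two]
  field_simp
  ring

theorem legal_replicate_two (n : ℕ) : Legal (List.replicate n 2) :=
  ⟨fun h => by simp, List.isChain_replicate_of_rel n (by decide)⟩

theorem tameFE_replicate_two {q : K} (hq : q ≠ 1) (n : ℕ) : TameFE q (List.replicate n 2) := by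
  induction n using Nat.twoStepInduction with
  | zero => exact tameFE_nil q
  | one => exact tameFE_two hq
  | more n ih _ => exact ih.two_two hq (legal_replicate_two n)

/-! ### Extremal coefficients -/

theorem totalDegree_step_le (q : K) {n w m : ℕ} {p : MvPolynomial ℤ K} (hp : p.totalDegree ≤ m) :
    (step q n w p).totalDegree ≤ m + 1 := by
  have hX : (𝐱 (n + 1)).totalDegree ≤ 1 := (MvPolynomial.totalDegree_X _).le
  have hleft : (𝐱 (n + 1) - MvPolynomial.C (q ^ w)).totalDegree ≤ 1 :=
    (MvPolynomial.totalDegree_sub_C_le _ _).trans hX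
  have hright : (1 - 𝐱 (n + 1)).totalDegree ≤ 1 :=
    (MvPolynomial.totalDegree_sub _ _).trans
      (max_le (MvPolynomial.totalDegree_one.trans_le zero_le_one) hX)
  rw [step_apply, MvPolynomial.C_mul']
  refine (MvPolynomial.totalDegree_smul_le _ _).trans
    ((MvPolynomial.totalDegree_add _ _).trans (max_le ?_ ?_)) <;>
    refine (MvPolynomial.totalDegree_mul _ _).trans ?_ <;> rw [add_comm m]
  · exact add_le_add hleft hp
  · exact add_le_add hright ((totalDegree_scaleVars_le _ _ _).trans hp)

theorem step_mem_idealOfVars_pow (q : K) {n w m : ℕ} {p : MvPolynomial ℤ K}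
    (hp : p ∈ MvPolynomial.idealOfVars ℤ K ^ m) :
    step q n w p ∈ MvPolynomial.idealOfVars ℤ K ^ m := by
  rw [step_apply]
  exact Ideal.mul_mem_left _ _ (add_mem (Ideal.mul_mem_left _ _ hp)
    (Ideal.mul_mem_left _ _ (scaleVars_mem_idealOfVars_pow hp)))

/-- The `q`-integer `[n]_q` as a polynomial in `q` with natural coefficients, so that its value at
`q = 1` makes sense even though `step` is singular there. -/
def qnat (n : ℕ) : ℕ[X] := ∑ i ∈ Finset.range n, X ^ i

theorem aeval_qnat (q : K) (n : ℕ) : aeval q (qnat n) = qint q n := by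
  simp only [qnat, qint, map_sum, map_pow, aeval_X]

theorem eval_one_qnat (n : ℕ) : (qnat n).eval 1 = n := by
  simp only [qnat, eval_geom_sum, one_pow, Finset.sum_const, Finset.card_range, smul_eq_mul,
    mul_one]

/-- The coefficient of `x_i x_1 ⋯ x_{n + ℓ}`, as a polynomial in `q`, after the monomial
`x_i x_1 ⋯ x_n` has been extended by a schedule of length `ℓ`. -/
def topCoeff (i : ℤ) : ℕ → List ℕ → ℕ[X]
  | _, [] => 1
  | n, w :: W => qnat #(window n w ∩ insert i (Finset.Icc 1 (n : ℤ))) * topCoeff i (n + 1) W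

/-- The coefficient of `x_i`, as a polynomial in `q`, after the monomial `x_i` at position `n` has
been extended by a schedule. -/
def bottomCoeff (i : ℤ) : ℕ → List ℕ → ℕ[X]
  | _, [] => 1
  | n, w :: W => X ^ #(window n w ∩ {i}) * qnat (w - #(window n w ∩ {i})) *
      bottomCoeff i (n + 1) W

theorem aeval_topCoeff_cons (q : K) (i : ℤ) (n w : ℕ) (W : List ℕ) :
    aeval q (topCoeff i n (w :: W)) =
      qint q #(window n w ∩ insert i (Finset.Icc 1 (n : ℤ))) * aeval q (topCoeff i (n + 1) W) := by
  rw [topCoeff, map_mul, aeval_qnat]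

theorem aeval_bottomCoeff_cons (q : K) (i : ℤ) (n w : ℕ) (W : List ℕ) :
    aeval q (bottomCoeff i n (w :: W)) =
      q ^ #(window n w ∩ {i}) * qint q (w - #(window n w ∩ {i})) *
        aeval q (bottomCoeff i (n + 1) W) := by
  rw [bottomCoeff, map_mul, map_mul, map_pow, aeval_X, aeval_qnat]

theorem totalDegree_step_sub_le {q : K} (hq : q ≠ 1) {i : ℤ} (hi : i ≤ 0) {n w : ℕ} {g : K}
    {p : MvPolynomial ℤ K}
    (hp : (p - MvPolynomial.C g * (𝐱 i * ∏ j ∈ Finset.Icc (1 : ℤ) n, 𝐱 j)).totalDegree ≤ n) :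
    (step q n w p -
      MvPolynomial.C (g * qint q #(window n w ∩ insert i (Finset.Icc 1 (n : ℤ)))) *
        (𝐱 i * ∏ j ∈ Finset.Icc (1 : ℤ) (n + 1 : ℕ), 𝐱 j)).totalDegree ≤ n + 1 := by
  have hiT : i ∉ Finset.Icc 1 (n : ℤ) := by
    rw [Finset.mem_Icc]
    lia
  have hprod : 𝐱 i * ∏ j ∈ Finset.Icc (1 : ℤ) n, 𝐱 j =
      ∏ j ∈ insert i (Finset.Icc 1 (n : ℤ)), 𝐱 j := (Finset.prod_insert hiT).symm
  have hcard : #(insert i (Finset.Icc 1 (n : ℤ))) = n + 1 := by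
    simp [Finset.card_insert_of_notMem hiT]
  rw [prod_Icc_add_one, mul_left_comm (𝐱 i), hprod]
  rw [hprod] at hp
  generalize insert i (Finset.Icc 1 (n : ℤ)) = T at *
  have hstep : step q n w p -
        MvPolynomial.C (g * qint q #(window n w ∩ T)) * (𝐱 (n + 1) * ∏ j ∈ T, 𝐱 j) =
      (g * (q ^ #(window n w ∩ T) * qint q (w - #(window n w ∩ T)))) • ∏ j ∈ T, 𝐱 j +
        step q n w (p - MvPolynomial.C g * ∏ j ∈ T, 𝐱 j) := by
    rw [map_sub, MvPolynomial.C_mul' (a := g), map_smul, step_prod_X hq]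
    simp only [← MvPolynomial.C_mul', map_mul]
    ring
  rw [hstep]
  exact (MvPolynomial.totalDegree_add _ _).trans
    (max_le ((MvPolynomial.totalDegree_smul_le _ _).trans
      ((totalDegree_prod_X_le T).trans_eq hcard)) (totalDegree_step_le q hp))

theorem totalDegree_run_sub_le {q : K} (hq : q ≠ 1) {i : ℤ} (hi : i ≤ 0) {n : ℕ} (W : List ℕ)
    {g : K} {p : MvPolynomial ℤ K}
    (hp : (p - MvPolynomial.C g * (𝐱 i * ∏ j ∈ Finset.Icc (1 : ℤ) n, 𝐱 j)).totalDegree ≤ n) :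
    (run q n W p - MvPolynomial.C (g * aeval q (topCoeff i n W)) *
      (𝐱 i * ∏ j ∈ Finset.Icc (1 : ℤ) (n + W.length : ℕ), 𝐱 j)).totalDegree ≤ n + W.length := by
  induction W generalizing n g p with
  | nil => simpa [run, topCoeff] using hp
  | cons w W ih =>
    rw [run_cons, aeval_topCoeff_cons, ← mul_assoc g, List.length_cons, add_comm W.length,
      ← add_assoc]
    exact ih (totalDegree_step_sub_le hq hi hp)

theorem step_sub_mem_idealOfVars_sq {q : K} (hq : q ≠ 1) {i : ℤ} {n w : ℕ} {a : K}
    {p : MvPolynomial ℤ K}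
    (hp : p - MvPolynomial.C a * 𝐱 i ∈ MvPolynomial.idealOfVars ℤ K ^ 2) :
    step q n w p - MvPolynomial.C
        (a * (q ^ #(window n w ∩ {i}) * qint q (w - #(window n w ∩ {i})))) * 𝐱 i ∈
      MvPolynomial.idealOfVars ℤ K ^ 2 := by
  have X_mem (j : ℤ) : 𝐱 j ∈ MvPolynomial.idealOfVars ℤ K :=
    Ideal.subset_span (Set.mem_range_self j)
  have hstep : step q n w p - MvPolynomial.C
        (a * (q ^ #(window n w ∩ {i}) * qint q (w - #(window n w ∩ {i})))) * 𝐱 i =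
      MvPolynomial.C (a * qint q #(window n w ∩ {i})) * (𝐱 (n + 1) * 𝐱 i) +
        step q n w (p - MvPolynomial.C a * 𝐱 i) := by
    rw [map_sub, MvPolynomial.C_mul' (a := a), map_smul, step_X hq]
    simp only [← MvPolynomial.C_mul', map_mul]
    ring
  rw [hstep]
  refine add_mem (Ideal.mul_mem_left _ _ ?_) (step_mem_idealOfVars_pow q hp)
  exact sq (MvPolynomial.idealOfVars ℤ K) ▸ Ideal.mul_mem_mul (X_mem _) (X_mem _)

theorem run_sub_mem_idealOfVars_sq {q : K} (hq : q ≠ 1) {i : ℤ} {n : ℕ} (W : List ℕ) {a : K}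
    {p : MvPolynomial ℤ K}
    (hp : p - MvPolynomial.C a * 𝐱 i ∈ MvPolynomial.idealOfVars ℤ K ^ 2) :
    run q n W p - MvPolynomial.C (a * aeval q (bottomCoeff i n W)) * 𝐱 i ∈
      MvPolynomial.idealOfVars ℤ K ^ 2 := by
  induction W generalizing n a p with
  | nil => simpa [run, bottomCoeff] using hp
  | cons w W ih =>
    rw [run_cons, aeval_bottomCoeff_cons, ← mul_assoc a]
    exact ih (step_sub_mem_idealOfVars_sq hq hp)

theorem natDegree_toUnivariate_run_X_sub_le {q : K} (hq : q ≠ 1) {i : ℤ} (hi : i ≤ 0)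
    (W : List ℕ) :
    (toUnivariate (run q 0 W (𝐱 i)) -
      C (aeval q (topCoeff i 0 W)) * X ^ (W.length + 1)).natDegree ≤ W.length := by
  have h := totalDegree_run_sub_le hq hi (n := 0) W (g := 1) (p := 𝐱 i) (by simp)
  simpa only [zero_add, one_mul, map_sub, map_mul, toUnivariate_C,
    toUnivariate_X, toUnivariate_prod_X, Int.card_Icc, add_sub_cancel_right, Int.toNat_natCast,
    ← pow_succ'] using (natDegree_toUnivariate_le _).trans h

theorem X_sq_dvd_toUnivariate_run_X_sub {q : K} (hq : q ≠ 1) (i : ℤ) (W : List ℕ) :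
    X ^ 2 ∣ toUnivariate (run q 0 W (𝐱 i)) - C (aeval q (bottomCoeff i 0 W)) * X := by
  have h := run_sub_mem_idealOfVars_sq hq (i := i) (n := 0) W (a := 1) (p := 𝐱 i) (by simp)
  simpa only [one_mul, map_sub, map_mul, toUnivariate_C,
    toUnivariate_X] using X_pow_dvd_toUnivariate h

theorem Qsched_eq_add (q : K) (W : List ℕ) :
    Qsched q W =
      C q * toUnivariate (run q 0 W (𝐱 (-1))) + toUnivariate (run q 0 W (𝐱 0)) := by
  rw [Qsched_eq, map_add, run_C_mul, map_add, map_mul, toUnivariate_C]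

theorem natDegree_Qsched_sub_le {q : K} (hq : q ≠ 1) (W : List ℕ) :
    (Qsched q W - C (q * aeval q (topCoeff (-1) 0 W) + aeval q (topCoeff 0 0 W)) *
      X ^ (W.length + 1)).natDegree ≤ W.length := by
  have h := natDegree_add_le_of_degree_le
    ((natDegree_C_mul_le q _).trans
      (natDegree_toUnivariate_run_X_sub_le hq (neg_nonpos.mpr zero_le_one) W))
    (natDegree_toUnivariate_run_X_sub_le hq le_rfl W)
  convert h using 2
  rw [Qsched_eq_add, map_add, map_mul]
  ring

theorem X_sq_dvd_Qsched_sub {q : K} (hq : q ≠ 1) (W : List ℕ) :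
    X ^ 2 ∣ Qsched q W -
      C (q * aeval q (bottomCoeff (-1) 0 W) + aeval q (bottomCoeff 0 0 W)) * X := by
  have h := dvd_add ((X_sq_dvd_toUnivariate_run_X_sub hq (-1) W).mul_left (C q))
    (X_sq_dvd_toUnivariate_run_X_sub hq 0 W)
  convert h using 1
  rw [Qsched_eq_add, map_add, map_mul]
  ring

theorem natDegree_Qsched_le {q : K} (hq : q ≠ 1) (W : List ℕ) :
    (Qsched q W).natDegree ≤ W.length + 1 := by
  have h := natDegree_add_le_of_degree_le
    ((natDegree_Qsched_sub_le hq W).trans (Nat.le_succ _))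
    (natDegree_C_mul_X_pow_le (q * aeval q (topCoeff (-1) 0 W) + aeval q (topCoeff 0 0 W)) _)
  rwa [sub_add_cancel] at h

theorem coeff_length_succ_Qsched {q : K} (hq : q ≠ 1) (W : List ℕ) :
    (Qsched q W).coeff (W.length + 1) =
      q * aeval q (topCoeff (-1) 0 W) + aeval q (topCoeff 0 0 W) := by
  have h := coeff_eq_zero_of_natDegree_lt (Nat.lt_succ_of_le (natDegree_Qsched_sub_le hq W))
  rwa [coeff_sub, coeff_C_mul_X_pow, if_pos rfl, sub_eq_zero] at h

theorem coeff_zero_Qsched {q : K} (hq : q ≠ 1) (W : List ℕ) : (Qsched q W).coeff 0 = 0 := by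
  have h := X_pow_dvd_iff.mp (X_sq_dvd_Qsched_sub hq W) 0 two_pos
  rwa [coeff_sub, coeff_C_mul, coeff_X_zero, mul_zero, sub_zero] at h

theorem coeff_one_Qsched {q : K} (hq : q ≠ 1) (W : List ℕ) :
    (Qsched q W).coeff 1 =
      q * aeval q (bottomCoeff (-1) 0 W) + aeval q (bottomCoeff 0 0 W) := by
  have h := X_pow_dvd_iff.mp (X_sq_dvd_Qsched_sub hq W) 1 one_lt_two
  rwa [coeff_sub, coeff_C_mul, coeff_X_one, mul_one, sub_eq_zero] at h

section FunctionalEquation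

variable {F : Type*} [Field F] {Q : F[X]} {m : ℕ}

theorem eval_reflect (hQ : Q.natDegree ≤ m) {x : F} (hx : x ≠ 0) :
    (reflect m Q).eval x = x ^ m * Q.eval x⁻¹ := by
  let : Invertible x⁻¹ := invertibleOfNonzero (inv_ne_zero hx)
  have h : (reflect m Q).eval x * x⁻¹ ^ m = Q.eval x⁻¹ := by
    simpa only [invOf_eq_inv, inv_inv] using! eval₂_reflect_mul_pow (RingHom.id F) x⁻¹ m Q hQ
  rw [← h, inv_pow, mul_comm, inv_mul_cancel_right₀ (pow_ne_zero m hx)]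

theorem coeff_relation_of_functional_equation [Infinite F] (hm : 0 < m) (hQ : Q.natDegree ≤ m)
    {q c : F}
    (h : ∀ x : F, x ≠ 0 →
      (1 - q / x) * Q.eval x + x ^ m * (1 - q * x) * Q.eval x⁻¹ = (1 + x ^ m) * c) :
    Q.coeff 0 - q * Q.coeff 1 + Q.coeff m = c := by
  have hpoly : (X - C q) * Q + X * ((1 - C q * X) * reflect m Q) =
      X * ((1 + X ^ m) * C c) := by
    refine eq_of_infinite_eval_eq _ _
      ((Set.finite_singleton (0 : F)).infinite_compl.mono fun x hx => ?_)
    have hx : x ≠ 0 := hx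
    have hdiv : x * (1 - q / x) = x - q := by
      rw [mul_sub, mul_one, mul_div_cancel₀ q hx]
    simp only [Set.mem_ofPred_eq, eval_add, eval_mul, eval_sub, eval_X, eval_C, eval_one,
      eval_pow, eval_reflect hQ hx, ← hdiv]
    linear_combination x * h x hx
  have hcoeff := congrArg (coeff · 1) hpoly
  simpa [sub_mul, coeff_X_mul, mul_coeff_zero, coeff_reflect, hm.ne', hm.ne] using hcoeff

end FunctionalEquation

/-! ### Extremal coefficients at `q = 1` -/

theorem card_window_inter_le {i j : ℤ} (hij : i ≠ j) (hj : j ≤ 0) (n w : ℕ) :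
    #(window n w ∩ insert i (Finset.Icc 1 (n : ℤ))) ≤ w - #(window n w ∩ {j}) := by
  refine Nat.le_sub_of_add_le ?_
  rw [← Finset.card_union_of_disjoint, ← Finset.inter_union_distrib_left]
  · exact (Finset.card_le_card Finset.inter_subset_left).trans_eq (card_window n w)
  · refine Disjoint.mono Finset.inter_subset_right Finset.inter_subset_right ?_
    rw [Finset.disjoint_singleton_right, Finset.mem_insert, Finset.mem_Icc]
    lia

theorem eval_one_topCoeff_cons (i : ℤ) (n w : ℕ) (W : List ℕ) :
    (topCoeff i n (w :: W)).eval 1 =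
      #(window n w ∩ insert i (Finset.Icc 1 (n : ℤ))) * (topCoeff i (n + 1) W).eval 1 := by
  rw [topCoeff, eval_mul, eval_one_qnat]

theorem eval_one_bottomCoeff_cons (i : ℤ) (n w : ℕ) (W : List ℕ) :
    (bottomCoeff i n (w :: W)).eval 1 =
      (w - #(window n w ∩ {i})) * (bottomCoeff i (n + 1) W).eval 1 := by
  rw [bottomCoeff, eval_mul, eval_mul, eval_pow, eval_X, one_pow, one_mul, eval_one_qnat]

theorem eval_one_topCoeff_le {i j : ℤ} (hij : i ≠ j) (hj : j ≤ 0) (n : ℕ) (W : List ℕ) :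
    (topCoeff i n W).eval 1 ≤ (bottomCoeff j n W).eval 1 := by
  induction W generalizing n with
  | nil => rfl
  | cons w W ih =>
    rw [eval_one_topCoeff_cons, eval_one_bottomCoeff_cons]
    exact Nat.mul_le_mul (card_window_inter_le hij hj n w) (ih (n + 1))

theorem card_window_inter_singleton_le (n w : ℕ) (i : ℤ) : #(window n w ∩ {i}) ≤ 1 :=
  (Finset.card_le_card Finset.inter_subset_right).trans_eq (Finset.card_singleton i)

theorem card_window_inter_singleton_lt {i : ℤ} (hi : i ≤ 0) {n w : ℕ} (hn : 0 < n) (hw : 0 < w) :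
    #(window n w ∩ {i}) < w := by
  refine (Finset.card_lt_card (Finset.ssubset_iff_subset_ne.mpr
    ⟨Finset.inter_subset_left, fun h => ?_⟩)).trans_eq (card_window n w)
  have hmem : (n : ℤ) ∈ window n w := mem_window.mpr ⟨by lia, le_rfl⟩
  rw [← h, Finset.mem_inter, Finset.mem_singleton] at hmem
  lia

theorem eval_one_bottomCoeff_pos {i : ℤ} (hi : i ≤ 0) {n : ℕ} (hn : 0 < n) {W : List ℕ}
    (hW : ∀ w ∈ W, 0 < w) : 0 < (bottomCoeff i n W).eval 1 := by
  induction W generalizing n with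
  | nil => simp only [bottomCoeff, eval_one, one_pos]
  | cons w W ih =>
    obtain ⟨hw, hW⟩ := List.forall_mem_cons.mp hW
    rw [eval_one_bottomCoeff_cons]
    exact Nat.mul_pos (Nat.sub_pos_of_lt (card_window_inter_singleton_lt hi hn hw))
      (ih (Nat.succ_pos n) hW)

theorem eval_one_topCoeff_lt {i j : ℤ} (hij : i ≠ j) (hj : j ≤ 0) {w : ℕ} {W : List ℕ}
    (hw : 3 ≤ w) (hW : ∀ v ∈ W, 0 < v) :
    (topCoeff i 0 (w :: W)).eval 1 < (bottomCoeff j 0 (w :: W)).eval 1 := by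
  rw [eval_one_topCoeff_cons, eval_one_bottomCoeff_cons]
  have htop : #(window 0 w ∩ insert i (Finset.Icc 1 ((0 : ℕ) : ℤ))) ≤ 1 :=
    card_window_inter_singleton_le 0 w i
  have hbottom := card_window_inter_singleton_le 0 w j
  exact Nat.mul_lt_mul_of_lt_of_le (by lia) (eval_one_topCoeff_le hij hj 1 W)
    (eval_one_bottomCoeff_pos hj one_pos hW)

theorem aeval_qq_injective : Function.Injective (aeval qq : ℕ[X] →ₐ[ℕ] K) := by
  have h (p : ℕ[X]) : aeval qq p = algebraMap ℚ[X] K (p.map (algebraMap ℕ ℚ)) := by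
    rw [← RatFunc.aeval_X_left_eq_algebraMap, aeval_map_algebraMap, qq]
  intro p p' hp
  rw [h, h] at hp
  exact map_injective _ (FaithfulSMul.algebraMap_injective ℕ ℚ) (RatFunc.algebraMap_injective ℚ hp)

theorem qq_ne_one : qq ≠ 1 := fun h =>
  X_ne_C (1 : ℕ) (aeval_qq_injective (by rw [aeval_X, h, C_1, map_one]))

theorem TameFE.coeff_relation {W : List ℕ} (h : TameFE qq W) :
    X * topCoeff (-1) 0 W + topCoeff 0 0 W + X ^ 2 * (W.map qnat).prod =
      X * (X * bottomCoeff (-1) 0 W + bottomCoeff 0 0 W) + (W.map qnat).prod := by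
  have hprod : aeval qq (W.map qnat).prod = (W.map (qint qq)).prod := by
    rw [map_list_prod, List.map_map]
    exact congrArg List.prod (List.map_congr_left fun w _ => aeval_qnat qq w)
  have hrel := coeff_relation_of_functional_equation W.length.succ_pos
    (natDegree_Qsched_le qq_ne_one W) h
  rw [coeff_zero_Qsched qq_ne_one, coeff_one_Qsched qq_ne_one,
    coeff_length_succ_Qsched qq_ne_one] at hrel
  apply aeval_qq_injective
  simp only [map_add, map_mul, map_pow, aeval_X, hprod]
  linear_combination hrel

theorem not_tameFE_cons {w : ℕ} {W : List ℕ} (hw : 3 ≤ w) (hW : ∀ v ∈ W, 0 < v) :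
    ¬ TameFE qq (w :: W) := by
  intro h
  have hrel := congrArg (eval 1) h.coeff_relation
  simp only [eval_add, eval_mul, eval_X, eval_pow, one_pow, one_mul] at hrel
  have h₀ : (topCoeff (-1) 0 (w :: W)).eval 1 < (bottomCoeff 0 0 (w :: W)).eval 1 :=
    eval_one_topCoeff_lt (by decide) le_rfl hw hW
  have h₁ : (topCoeff 0 0 (w :: W)).eval 1 < (bottomCoeff (-1) 0 (w :: W)).eval 1 :=
    eval_one_topCoeff_lt (by decide) (by decide) hw hW
  lia

theorem pos_of_mem_of_isChain {a : ℕ} {W : List ℕ}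
    (hW : (a :: W).IsChain fun a b => 1 ≤ b ∧ b ≤ a + 1) : ∀ w ∈ W, 0 < w := by
  induction W generalizing a with
  | nil => exact List.forall_mem_nil _
  | cons w W ih =>
    obtain ⟨hw, hW⟩ := List.isChain_cons_cons.mp hW
    exact List.forall_mem_cons.mpr ⟨hw.1, ih hW⟩

theorem TameFE.legal_of_legal_two_two {W : List ℕ} (h : TameFE qq W)
    (hW : Legal (2 :: 2 :: W)) : Legal W := by
  have hchain : (2 :: W).IsChain fun a b => 1 ≤ b ∧ b ≤ a + 1 := hW.2.tail
  refine ⟨fun hne => ?_, hchain.tail⟩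
  obtain ⟨w, W, rfl⟩ := List.exists_cons_of_ne_nil hne
  obtain ⟨hw, hW⟩ := List.isChain_cons_cons.mp hchain
  refine ⟨hw.1, Nat.le_of_lt_succ (hw.2.lt_of_ne ?_)⟩
  rintro rfl
  exact not_tameFE_cons le_rfl (pos_of_mem_of_isChain hW) h

/-- if W is a tame legal schedule then (2,2,W) is tame; in
particular all schedules (2,2,…,2) are tame. -/
theorem stmt12 :
    (∀ W : List ℕ, Legal (2 :: 2 :: W) → TameFE qq W → TameFE qq (2 :: 2 :: W)) ∧
      ∀ n : ℕ, TameFE qq (List.replicate n 2) :=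
  ⟨fun _ hL hW => hW.two_two qq_ne_one (hW.legal_of_legal_two_two hL),
    tameFE_replicate_two qq_ne_one⟩

end
end

section
/- With W = (U,v,v+1,V',j,V'') as above (canonical increase (v,v+1) split first by a bar of length j at position h+j), one has Q_W = (q/(1+q)) Q_{U,v,v+1,V',j-1,V''} + Q_{U,v,v,V',j+1,V''} - (q/(1+q)) Q_{U,v-1,v,V',j+1,V''}. -/
open Polynomial Finset

noncomputable section

/-!
Evaluate `Prev q L` at a point `s`. A bar of length `w` after `n` positions multiplies `s` by the
weight that is `q` on the last `w` of these positions and `1` elsewhere, so two facts control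
everything: such weights commute, and the evaluation is affine in each coordinate. On the locus
where the two coordinates at the pair `(v, v + 1)` agree, two three-term relations hold.

* `P_{U,v,v+1,V} = (1+q) P_{U,v,v,V} - q P_{U,v-1,v,V}` when no bar of `V` splits the pair. For
  empty `V` this is an expansion of two recursion steps, together with affinity in one coordinate
  belonging to `U`; a bar that does not split the pair maps the locus into itself.
* `P_{U,v,v+1,V',j+1,V''} = (1+q) P_{U,v,v+1,V',j,V''} - q P_{U,v,v+1,V',j-1,V''}` when the bar of
  length `j` splits the pair and no bar of `V'` or `V''` does. At this place the bars of lengths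
  `j-1`, `j`, `j+1` differ by rescaling none, the second, or both coordinates of the pair.

The diagonal lies in the locus, so both relations hold for `Q`; eliminate
`Q_{U,v,v+1,V',j+1,V''}` between them.
-/

/-- The weight by which a bar of length `w` placed after `n` positions rescales the variable at
position `j`. -/
def barFactor (q : K) (n w : ℕ) (j : ℤ) : K :=
  if (n : ℤ) + 1 - w ≤ j ∧ j ≤ n then q else 1

lemma barFactor_succ (q : K) (n w : ℕ) :
    barFactor q n (w + 1) = Pi.mulSingle ((n : ℤ) - w) q * barFactor q n w := by
  funext j
  by_cases hj : j = (n : ℤ) - w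
  · subst hj
    simp [barFactor]
  · have hrange : (n : ℤ) + 1 - (w + 1 : ℕ) ≤ j ↔ (n : ℤ) + 1 - w ≤ j := by omega
    simp only [barFactor, Pi.mul_apply, Pi.mulSingle_eq_of_ne hj, one_mul, hrange]

lemma barFactor_succ_succ (q : K) {n : ℕ} (w : ℕ) {j : ℤ} (hj : j ≤ n) :
    barFactor q (n + 1) (w + 1) j = barFactor q n w j := by
  unfold barFactor
  congr 1
  apply propext
  omega

lemma barFactor_succ_succ_top (q : K) (n w : ℕ) :
    barFactor q (n + 1) (w + 1) ((n : ℤ) + 1) = q :=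
  if_pos (by omega)

lemma barFactor_eq_of_not_split (q : K) {n w : ℕ} {i : ℤ} (hi : i + 1 ≤ n)
    (hw : (n : ℤ) + 1 - w ≠ i + 1) : barFactor q n w i = barFactor q n w (i + 1) := by
  unfold barFactor
  congr 1
  apply propext
  omega

lemma barFactor_mul_eq_of_not_split (q : K) {n w : ℕ} {i : ℤ} (hi : i + 1 ≤ n)
    (hw : (n : ℤ) + 1 - w ≠ i + 1) {s : ℤ → K} (hs : s i = s (i + 1)) :
    (barFactor q n w * s) i = (barFactor q n w * s) (i + 1) := by
  rw [Pi.mul_apply, Pi.mul_apply, barFactor_eq_of_not_split q hi hw, hs]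

/-- The value of `Prev q L` at the point `s`; as in `Prev`, the list `L` is a schedule read
backwards. -/
def evalPrev (q : K) (L : List ℕ) (s : ℤ → K) : K := MvPolynomial.eval s (Prev q L)

lemma evalPrev_nil (q : K) (s : ℤ → K) : evalPrev q [] s = q * s (-1) + s 0 := by
  simp [evalPrev, Prev]

lemma evalPrev_cons (q : K) (w : ℕ) (L : List ℕ) (s : ℤ → K) :
    evalPrev q (w :: L) s =
      (1 - q)⁻¹ * ((s (L.length + 1) - q ^ w) * evalPrev q L s +
        (1 - s (L.length + 1)) * evalPrev q L (barFactor q L.length w * s)) := by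
  have hsub : (fun j : ℤ => MvPolynomial.aeval s
      (if (L.length : ℤ) + 1 - w ≤ j ∧ j ≤ L.length then
        MvPolynomial.C q * MvPolynomial.X j else MvPolynomial.X j)) =
      barFactor q L.length w * s := by
    funext j
    simp only [Pi.mul_apply, barFactor]
    split_ifs <;> simp
  simp only [evalPrev, Prev, ← MvPolynomial.aeval_eq_eval, map_mul, map_add, map_sub, map_one,
    MvPolynomial.aeval_X, MvPolynomial.algHom_C, Algebra.algebraMap_self_apply,
    MvPolynomial.comp_aeval_apply, hsub]

lemma evalPrev_congr (q : K) {L : List ℕ} {s t : ℤ → K}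
    (h : ∀ j : ℤ, j ≤ L.length → s j = t j) : evalPrev q L s = evalPrev q L t := by
  induction L generalizing s t with
  | nil => simp only [evalPrev_nil, h (-1) (by simp), h 0 (by simp)]
  | cons w L ih =>
    simp only [List.length_cons, Nat.cast_add, Nat.cast_one] at h
    have hst (j : ℤ) (hj : j ≤ L.length) : s j = t j := h j (by omega)
    have hbar (j : ℤ) (hj : j ≤ L.length) :
        (barFactor q L.length w * s) j = (barFactor q L.length w * t) j :=
      congrArg (barFactor q L.length w j * ·) (hst j hj)
    rw [evalPrev_cons, evalPrev_cons, h _ le_rfl, ih hst, ih hbar]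

lemma evalPrev_mulSingle_mul_of_length_lt (q t : K) {L : List ℕ} {i : ℤ} (hi : L.length < i)
    (s : ℤ → K) : evalPrev q L (Pi.mulSingle i t * s) = evalPrev q L s :=
  evalPrev_congr q fun j hj => by
    rw [Pi.mul_apply, Pi.mulSingle_eq_of_ne (by omega), one_mul]

lemma evalPrev_mulSingle_mul (q : K) (L : List ℕ) (i : ℤ) (t : K) (s : ℤ → K) :
    evalPrev q L (Pi.mulSingle i t * s) =
      (1 - t) * evalPrev q L (Pi.mulSingle i 0 * s) + t * evalPrev q L s := by
  induction L generalizing s with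
  | nil =>
    simp only [evalPrev_nil, Pi.mul_apply, Pi.mulSingle_apply]
    split_ifs <;> first | omega | ring
  | cons w L ih =>
    by_cases hi : i = L.length + 1
    · subst hi
      simp only [evalPrev_cons, mul_left_comm (barFactor _ _ _), Pi.mul_apply,
        Pi.mulSingle_eq_same, evalPrev_mulSingle_mul_of_length_lt q _ (lt_add_one (L.length : ℤ))]
      ring
    · simp only [evalPrev_cons, mul_left_comm (barFactor _ _ _), Pi.mul_apply,
        Pi.mulSingle_eq_of_ne' hi]
      rw [ih s, ih (barFactor q L.length w * s)]
      ring

lemma evalPrev_mulSingle_mul_mulSingle_mul (q : K) (L : List ℕ) (i : ℤ) (s : ℤ → K) :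
    evalPrev q L (Pi.mulSingle i q * (Pi.mulSingle i q * s)) =
      (1 + q) * evalPrev q L (Pi.mulSingle i q * s) - q * evalPrev q L s := by
  rw [← mul_assoc, ← Pi.mulSingle_mul, evalPrev_mulSingle_mul q L i (q * q),
    evalPrev_mulSingle_mul q L i q]
  ring

lemma evalPrev_cons_cons (q : K) (p w : ℕ) (L : List ℕ) (s : ℤ → K) :
    evalPrev q ((p + 1) :: w :: L) s =
      (1 - q)⁻¹ ^ 2 *
        ((s (L.length + 1 + 1) - q ^ (p + 1)) *
            ((s (L.length + 1) - q ^ w) * evalPrev q L s +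
              (1 - s (L.length + 1)) * evalPrev q L (barFactor q L.length w * s)) +
          (1 - s (L.length + 1 + 1)) *
            ((q * s (L.length + 1) - q ^ w) * evalPrev q L (barFactor q L.length p * s) +
              (1 - q * s (L.length + 1)) *
                evalPrev q L (barFactor q L.length w * (barFactor q L.length p * s)))) := by
  have hbar (j : ℤ) (hj : j ≤ L.length) :
      (barFactor q (L.length + 1) (p + 1) * s) j = (barFactor q L.length p * s) j :=
    congrArg (· * s j) (barFactor_succ_succ q p hj)
  have hbar' (j : ℤ) (hj : j ≤ L.length) :
      (barFactor q L.length w * (barFactor q (L.length + 1) (p + 1) * s)) j =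
        (barFactor q L.length w * (barFactor q L.length p * s)) j :=
    congrArg (barFactor q L.length w j * ·) (hbar j hj)
  simp only [evalPrev_cons, List.length_cons, Nat.cast_add, Nat.cast_one, evalPrev_congr q hbar,
    evalPrev_congr q hbar']
  rw [Pi.mul_apply, barFactor_succ_succ_top]
  ring

lemma eval_qsched (q : K) (W : List ℕ) (x : K) :
    (Qsched q W).eval x = evalPrev q W.reverse fun _ => x := by
  simp only [Qsched, Psched, evalPrev, ← Polynomial.coe_aeval_eq_eval,
    ← MvPolynomial.aeval_eq_eval, MvPolynomial.comp_aeval_apply, Polynomial.aeval_X]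

/-- No bar of `V` splits a given pair of consecutive positions `(i, i + 1)`, when `V` starts right
after position `i + 1 + c`. The `k`-th bar of `V` (counting from `0`) is then the one at position
`i + 1 + c + k + 1`, and it separates `i` from `i + 1` exactly when it has length `c + k + 1`. -/
def SplitFree (c : ℕ) (V : List ℕ) : Prop := ∀ k : ℕ, V[k]? ≠ some (c + k + 1)

namespace SplitFree

lemma cons_iff {c w : ℕ} {V : List ℕ} :
    SplitFree c (w :: V) ↔ w ≠ c + 1 ∧ SplitFree (c + 1) V := by
  simp only [SplitFree]
  rw [← Nat.and_forall_add_one]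
  simp [add_comm, add_left_comm]

lemma append_iff {c : ℕ} {V V' : List ℕ} :
    SplitFree c (V ++ V') ↔ SplitFree c V ∧ SplitFree (c + V.length) V' := by
  induction V generalizing c with
  | nil => simp [SplitFree]
  | cons w V ih => simp [cons_iff, ih, and_assoc, add_right_comm, ← add_assoc]

lemma of_forall_le {c : ℕ} {V : List ℕ} (hV : ∀ w ∈ V, w ≤ c) : SplitFree c V := by
  intro k hk
  have hle := hV _ (List.mem_of_getElem? hk)
  omega

end SplitFree

/-- The three-term relation `P_{L₁} = (1 + q) P_{L₂} - q P_{L₃}` on the locus where the variables at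
positions `i` and `i + 1` agree. -/
def DiagonalRel (q : K) (i : ℤ) (L₁ L₂ L₃ : List ℕ) : Prop :=
  ∀ s : ℤ → K, s i = s (i + 1) →
    evalPrev q L₁ s = (1 + q) * evalPrev q L₂ s - q * evalPrev q L₃ s

/-- The analogue of `DiagonalRel` for a single schedule, whose three terms are obtained by
rescaling both, the second, or none of the variables at positions `i` and `i + 1`. -/
def ScalingRel (q : K) (i : ℤ) (L : List ℕ) : Prop :=
  ∀ s : ℤ → K, s i = s (i + 1) →
    evalPrev q L (Pi.mulSingle i q * (Pi.mulSingle (i + 1) q * s)) =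
      (1 + q) * evalPrev q L (Pi.mulSingle (i + 1) q * s) - q * evalPrev q L s

namespace DiagonalRel

lemma cons_cons (q : K) (L : List ℕ) (v : ℕ) :
    DiagonalRel q (L.length + 1) ((v + 2) :: (v + 1) :: L) ((v + 1) :: (v + 1) :: L)
      ((v + 1) :: v :: L) := by
  intro s hs
  have haff := evalPrev_mulSingle_mul_mulSingle_mul q L ((L.length : ℤ) - v)
    (barFactor q L.length v * (barFactor q L.length v * s))
  simp only [evalPrev_cons_cons, ← hs, barFactor_succ, mul_assoc,
    mul_left_comm (barFactor _ _ _) (Pi.mulSingle _ _), haff]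
  ring

variable {q : K} {i : ℤ} {L₁ L₂ L₃ : List ℕ}

lemma cons {w : ℕ} (h₂ : L₂.length = L₁.length) (h₃ : L₃.length = L₁.length)
    (hi : i + 1 ≤ L₁.length) (hw : (L₁.length : ℤ) + 1 - w ≠ i + 1)
    (H : DiagonalRel q i L₁ L₂ L₃) : DiagonalRel q i (w :: L₁) (w :: L₂) (w :: L₃) := by
  intro s hs
  rw [evalPrev_cons, evalPrev_cons, evalPrev_cons, h₂, h₃, H s hs,
    H _ (barFactor_mul_eq_of_not_split q hi hw hs)]
  ring

lemma reverse_append {c : ℕ} {V : List ℕ} (h₂ : L₂.length = L₁.length)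
    (h₃ : L₃.length = L₁.length) (hc : (L₁.length : ℤ) = i + 1 + c) (hV : SplitFree c V)
    (H : DiagonalRel q i L₁ L₂ L₃) :
    DiagonalRel q i (V.reverse ++ L₁) (V.reverse ++ L₂) (V.reverse ++ L₃) := by
  induction V using List.reverseRecOn with
  | nil => exact H
  | append_singleton V w ih =>
    obtain ⟨hV, hw⟩ := SplitFree.append_iff.1 hV
    have hw := (SplitFree.cons_iff.1 hw).1
    simp only [List.reverse_append, List.reverse_singleton, List.cons_append]
    apply cons _ _ _ _ (ih hV) <;> simp only [List.length_append, List.length_reverse] <;> omega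

lemma qsched_eq {W₁ W₂ W₃ : List ℕ} (H : DiagonalRel q i W₁.reverse W₂.reverse W₃.reverse) :
    Qsched q W₁ = C (1 + q) * Qsched q W₂ - C q * Qsched q W₃ := by
  apply Polynomial.funext
  intro x
  simp only [eval_sub, eval_mul, eval_C, eval_qsched]
  exact H (fun _ => x) rfl

end DiagonalRel

namespace ScalingRel

lemma cons_cons (q : K) (L : List ℕ) (v : ℕ) :
    ScalingRel q (L.length + 1) ((v + 1) :: v :: L) := by
  intro s hs
  have h₁ : (L.length : ℤ) < L.length + 1 := by omega
  have h₂ : (L.length : ℤ) < L.length + 1 + 1 := by omega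
  simp only [evalPrev_cons_cons, mul_left_comm (barFactor _ _ _) (Pi.mulSingle _ _),
    evalPrev_mulSingle_mul_of_length_lt q _ h₁, evalPrev_mulSingle_mul_of_length_lt q _ h₂,
    Pi.mul_apply, Pi.mulSingle_eq_same, ← hs,
    Pi.mulSingle_eq_of_ne (lt_add_one ((L.length : ℤ) + 1)).ne,
    Pi.mulSingle_eq_of_ne (lt_add_one ((L.length : ℤ) + 1)).ne']
  ring

variable {q : K} {i : ℤ} {L : List ℕ}

lemma cons {w : ℕ} (hi : i + 1 ≤ L.length) (hw : (L.length : ℤ) + 1 - w ≠ i + 1)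
    (H : ScalingRel q i L) : ScalingRel q i (w :: L) := by
  intro s hs
  have h₁ : (L.length : ℤ) + 1 ≠ i := by omega
  have h₂ : (L.length : ℤ) + 1 ≠ i + 1 := by omega
  simp only [evalPrev_cons, mul_left_comm (barFactor _ _ _) (Pi.mulSingle _ _), Pi.mul_apply,
    Pi.mulSingle_eq_of_ne h₁, Pi.mulSingle_eq_of_ne h₂, one_mul]
  rw [H s hs, H _ (barFactor_mul_eq_of_not_split q hi hw hs)]
  ring

lemma reverse_append {c : ℕ} {V : List ℕ} (hc : (L.length : ℤ) = i + 1 + c) (hV : SplitFree c V)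
    (H : ScalingRel q i L) : ScalingRel q i (V.reverse ++ L) := by
  induction V using List.reverseRecOn with
  | nil => exact H
  | append_singleton V w ih =>
    obtain ⟨hV, hw⟩ := SplitFree.append_iff.1 hV
    have hw := (SplitFree.cons_iff.1 hw).1
    simp only [List.reverse_append, List.reverse_singleton, List.cons_append]
    apply cons _ _ (ih hV) <;> simp only [List.length_append, List.length_reverse] <;> omega

lemma diagonalRel_cons {k : ℕ} (hk : (L.length : ℤ) = i + 1 + k) (H : ScalingRel q i L) :
    DiagonalRel q i ((k + 2) :: L) ((k + 1) :: L) (k :: L) := by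
  intro s hs
  have h₁ : (L.length : ℤ) - k = i + 1 := by omega
  have h₂ : (L.length : ℤ) - (k + 1 : ℕ) = i := by omega
  have hs' : (barFactor q L.length k * s) i = (barFactor q L.length k * s) (i + 1) :=
    barFactor_mul_eq_of_not_split q (by omega) (by omega) hs
  simp only [evalPrev_cons, barFactor_succ, h₁, h₂, mul_assoc, H _ hs']
  ring

end ScalingRel

theorem qsched_eq_of_splitFree (q : K) (U : List ℕ) {V : List ℕ} {v : ℕ} (hv : 1 ≤ v)
    (hV : SplitFree 0 V) :
    Qsched q (U ++ v :: (v + 1) :: V) =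
      C (1 + q) * Qsched q (U ++ v :: v :: V) - C q * Qsched q (U ++ (v - 1) :: v :: V) := by
  obtain ⟨k, rfl⟩ := Nat.exists_eq_add_of_le' hv
  apply DiagonalRel.qsched_eq (i := U.reverse.length + 1)
  have hrel := (DiagonalRel.cons_cons q U.reverse k).reverse_append (c := 0)
    (by simp) (by simp) (by simp) hV
  simpa using hrel

theorem qsched_eq_of_split (q : K) (U : List ℕ) {V V' : List ℕ} (v : ℕ) (hV : SplitFree 0 V)
    (hV' : SplitFree (V.length + 1) V') :
    Qsched q (U ++ v :: (v + 1) :: (V ++ (V.length + 2) :: V')) =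
      C (1 + q) * Qsched q (U ++ v :: (v + 1) :: (V ++ (V.length + 1) :: V')) -
        C q * Qsched q (U ++ v :: (v + 1) :: (V ++ V.length :: V')) := by
  apply DiagonalRel.qsched_eq (i := U.reverse.length + 1)
  have hscal := (ScalingRel.cons_cons q U.reverse v).reverse_append (c := 0) (by simp) hV
  have hdiag := hscal.diagonalRel_cons (k := V.length) (by simp; ring)
  have hrel := hdiag.reverse_append (by simp) (by simp) (by simp; ring) hV'
  simpa using hrel

theorem stmt15_general {q : K} (hq : q ^ 2 ≠ 1) (U : List ℕ) {V' V'' : List ℕ} {v j : ℕ}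
    (hv : 1 ≤ v) (hpos : V'.length + 1 = j) (hV' : SplitFree 0 V') (hV'' : SplitFree j V'') :
    Qsched q (U ++ v :: (v + 1) :: (V' ++ j :: V'')) =
      C (q / (1 + q)) * Qsched q (U ++ v :: (v + 1) :: (V' ++ (j - 1) :: V'')) +
        Qsched q (U ++ v :: v :: (V' ++ (j + 1) :: V'')) -
          C (q / (1 + q)) * Qsched q (U ++ (v - 1) :: v :: (V' ++ (j + 1) :: V'')) := by
  subst hpos
  have hq1 : 1 + q ≠ 0 := fun h => hq (by linear_combination (q - 1) * h)
  have hfree : SplitFree 0 (V' ++ (V'.length + 2) :: V'') := by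
    rw [SplitFree.append_iff, SplitFree.cons_iff, zero_add]
    exact ⟨hV', by omega, hV''⟩
  have helim := (qsched_eq_of_split q U v hV' hV'').symm.trans (qsched_eq_of_splitFree q U hv hfree)
  have hinv : C (1 + q)⁻¹ * C (1 + q) = 1 := by rw [← C_mul, inv_mul_cancel₀ hq1, C_1]
  rw [Nat.add_sub_cancel, div_eq_mul_inv, C_mul]
  linear_combination C (1 + q)⁻¹ * helim -
    (Qsched q (U ++ v :: (v + 1) :: (V' ++ (V'.length + 1) :: V'')) -
      Qsched q (U ++ v :: v :: (V' ++ (V'.length + 2) :: V''))) * hinv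

lemma SplitFree.of_forall_getD {U V V' : List ℕ} {a b j : ℕ} (hj : V.length < j)
    (h : ∀ r : ℕ, r < (U ++ a :: b :: (V ++ V')).length →
      (r : ℤ) + 1 < (U.length : ℤ) + 2 + j →
      (r : ℤ) + 1 - ((U ++ a :: b :: (V ++ V')).getD r 0 : ℤ) ≠ (U.length : ℤ) + 2) :
    SplitFree 0 V := by
  intro k hk
  obtain ⟨hlt, -⟩ := List.getElem?_eq_some_iff.1 hk
  have hget : (U ++ a :: b :: (V ++ V')).getD (U.length + (k + 2)) 0 = 0 + k + 1 := by
    rw [List.getD_append_right _ _ _ _ (Nat.le_add_right _ _), Nat.add_sub_cancel_left,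
      List.getD_cons_succ, List.getD_cons_succ, List.getD_append _ _ _ _ hlt,
      List.getD_eq_getElem?_getD, hk, Option.getD_some]
  have hne := h (U.length + (k + 2))
    (by simp only [List.length_append, List.length_cons]; omega) (by omega)
  rw [hget] at hne
  omega

namespace Legal

lemma one_le_of_mem {W : List ℕ} (hW : Legal W) {w : ℕ} (hw : w ∈ W) : 1 ≤ w := by
  obtain ⟨hhead, hchain⟩ := hW
  cases W with
  | nil => simp at hw
  | cons a V =>
    rcases List.mem_cons.1 hw with rfl | hw
    · exact (hhead (List.cons_ne_nil _ _)).1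
    · obtain ⟨i, hi, rfl⟩ := List.getElem_of_mem hw
      exact (List.isChain_iff_getElem.1 hchain i (by simpa using hi)).1

lemma isChain_drop_of_no_increase {W : List ℕ} (hW : Legal W) {n : ℕ}
    (h : ∀ i, n ≤ i → i + 1 < W.length → W.getD (i + 1) 0 ≠ W.getD i 0 + 1) :
    (W.drop n).IsChain (· ≥ ·) := by
  rw [List.isChain_iff_getElem]
  intro i hi
  rw [List.length_drop] at hi
  have hle := (List.isChain_iff_getElem.1 hW.2 (n + i) (by omega)).2
  have hne := h (n + i) (by omega) (by omega)
  rw [List.getD_eq_getElem _ _ (by omega), List.getD_eq_getElem _ _ (by omega)] at hne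
  simp only [List.getElem_drop, ← add_assoc]
  omega

lemma splitFree_of_no_increase {W B V : List ℕ} {n j : ℕ} (hW : Legal W)
    (hdrop : W.drop n = B ++ j :: V)
    (h : ∀ i, n ≤ i → i + 1 < W.length → W.getD (i + 1) 0 ≠ W.getD i 0 + 1) : SplitFree j V := by
  have hdec := (hW.isChain_drop_of_no_increase h).pairwise
  rw [hdrop, List.pairwise_append] at hdec
  exact SplitFree.of_forall_le fun _ hw => List.rel_of_pairwise_cons hdec.2.1 hw

end Legal

lemma qq_sq_ne_one : qq ^ 2 ≠ 1 := by
  intro h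
  have hdeg := congrArg RatFunc.intDegree h
  rw [sq, qq, RatFunc.intDegree_mul RatFunc.X_ne_zero RatFunc.X_ne_zero, RatFunc.intDegree_X,
    RatFunc.intDegree_one] at hdeg
  omega

/-- Proposition 3.4, identity 3.10: with W = (U,v,v+1,V',j,V'') as
in Proposition 3.4,
Q_W = (q/(1+q)) Q_{U,v,v+1,V',j-1,V''} + Q_{U,v,v,V',j+1,V''} - (q/(1+q)) Q_{U,v-1,v,V',j+1,V''}. -/
theorem stmt15 (U V' V'' : List ℕ) (v j : ℕ)
    (hW : Legal (U ++ v :: (v + 1) :: (V' ++ j :: V'')))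
    -- the bar at position h + j (h = U.length + 2) has length j, i.e. it splits (v, v+1)
    (hpos : V'.length + 1 = j)
    -- (v, v+1) is the canonical (last) increase of W
    (hcanon : ∀ i : ℕ, U.length + 1 ≤ i →
      i + 1 < (U ++ v :: (v + 1) :: (V' ++ j :: V'')).length →
      (U ++ v :: (v + 1) :: (V' ++ j :: V'')).getD (i + 1) 0 ≠
        (U ++ v :: (v + 1) :: (V' ++ j :: V'')).getD i 0 + 1)
    -- no earlier bar splits the pair (v, v+1)
    (hfirst : ∀ r : ℕ, r < (U ++ v :: (v + 1) :: (V' ++ j :: V'')).length →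
      ((r : ℤ) + 1) < (U.length : ℤ) + 2 + (j : ℤ) →
      ((r : ℤ) + 1) - ((U ++ v :: (v + 1) :: (V' ++ j :: V'')).getD r 0 : ℤ) ≠
        (U.length : ℤ) + 2) :
    Qsched qq (U ++ v :: (v + 1) :: (V' ++ j :: V'')) =
      Polynomial.C (qq / (1 + qq)) * Qsched qq (U ++ v :: (v + 1) :: (V' ++ (j - 1) :: V'')) +
        Qsched qq (U ++ v :: v :: (V' ++ (j + 1) :: V'')) -
          Polynomial.C (qq / (1 + qq)) *
            Qsched qq (U ++ (v - 1) :: v :: (V' ++ (j + 1) :: V'')) :=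
  stmt15_general qq_sq_ne_one U (hW.one_le_of_mem (by simp)) hpos
    (SplitFree.of_forall_getD hpos.le hfirst)
    (hW.splitFree_of_no_increase (B := (v + 1) :: V') (by simp) hcanon)

end
end
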